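/- The running p-value is valid at arbitrary random times: for any ℕ-valued random variable N (not necessarily a stopping time) and every a ∈ [0,1], sup_{θ*∈Θ_0} Pr_{θ*}(P_N ≤ a) ≤ a, where P_n = 1/M_{α,β,n} (taken to be +∞ when M_{α,β,n} = 0). -/

import Mathlib

open MeasureTheory ENNReal
open scoped BigOperators Classical

noncomputable section

/-- Division in `ℝ≥0∞` with the convention that the ratio is `0` when the
denominator is `0`. -/
def safeDiv (a b : ℝ≥0∞) : ℝ≥0∞ := if b = 0 then 0 else a / b

variable {d : ℕ} {π : Fin d → Type*} [∀ i, MeasurableSpace (π i)]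

/-- The marginal density on the coordinates in `S`, obtained by integrating a density
out over the coordinates in `[d] \ S` (as a function of the full vector, depending only
on the coordinates in `S`). -/
def marginal (μ : ∀ i, Measure (π i)) (S : Finset (Fin d))
    (f : (∀ i, π i) → ℝ≥0∞) : (∀ i, π i) → ℝ≥0∞ :=
  MeasureTheory.lmarginal μ Sᶜ f

/-- The conditional density of the coordinates in `T1` given the coordinates in `T2`,
with the convention that the ratio is `0` when the denominator is `0`. -/
def condDens (μ : ∀ i, Measure (π i)) (T1 T2 : Finset (Fin d))
    (f : (∀ i, π i) → ℝ≥0∞) (x : ∀ i, π i) : ℝ≥0∞ :=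
  safeDiv (marginal μ (T1 ∪ T2) f x) (marginal μ T2 f x)

/-- `𝕊_d`: the nonempty subsets of `[d]`. -/
abbrev Sd (d : ℕ) := {S : Finset (Fin d) // S.Nonempty}

/-- `𝕋_d`: ordered pairs of disjoint nonempty subsets of `[d]`. -/
abbrev Td (d : ℕ) := {T : Finset (Fin d) × Finset (Fin d) //
  T.1.Nonempty ∧ T.2.Nonempty ∧ Disjoint T.1 T.2}

/-- The individual composite likelihood
`p_{α,β}(x;θ) = ∏_S p_S(x_S;θ)^(α_S/γ) ∏_T p(x_{T←}|x_{T→};θ)^(β_T/γ)`,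
where `f = p(·;θ)` is the joint density. -/
def compLik (μ : ∀ i, Measure (π i)) (α : Sd d → ℝ) (β : Td d → ℝ) (γ : ℝ)
    (f : (∀ i, π i) → ℝ≥0∞) (x : ∀ i, π i) : ℝ≥0∞ :=
  (∏ S : Sd d, marginal μ S.1 f x ^ (α S / γ)) *
  (∏ T : Td d, condDens μ T.1.1 T.1.2 f x ^ (β T / γ))

/-! The ratio of the composite likelihood of `p(·;θ)` to that of `p(·;θ*)` is a weighted geometric
mean of ratios of conditional densities, a marginal being a conditional given no coordinate. Each of
these ratios has mean at most `1` under `θ*`, hence by Hölder so has their geometric mean. Since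
`θ̃_i` depends on the past only, the product `L_n` of the ratios at `(θ̃_i, X_{i+1})`, `i < n`, is a
nonnegative supermartingale with `L_0 = 1`, and `θ* ∈ Θ₀` gives `M_n ≤ L_n` almost surely. Ville's
inequality bounds by `a` the probability that `L` ever reaches `1/a`, hence the probability that
`P_n ≤ a` for some `n`. -/

section MarginalIntegral

variable {ι : Type*} [DecidableEq ι] {E : ι → Type*} [∀ i, MeasurableSpace (E i)]
  {μ : ∀ i, Measure (E i)} {h f : (∀ i, E i) → ℝ≥0∞}

theorem dependsOn_lmarginal (s : Finset ι) (f : (∀ i, E i) → ℝ≥0∞) :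
    DependsOn (lmarginal μ s f) (sᶜ : Set ι) :=
  fun _ _ hxy => lmarginal_congr μ f hxy

theorem lmarginal_mul_of_dependsOn (s : Finset ι) (hh : DependsOn h (sᶜ : Set ι))
    (hf : Measurable f) (x : ∀ i, E i) :
    lmarginal μ s (fun y => h y * f y) x = h x * lmarginal μ s f x := by
  have h_update (y : ∀ i : s, E i) : h (Function.updateFinset x s y) = h x :=
    hh fun i hi => by simp_all [Function.updateFinset]
  simp only [lmarginal, h_update]
  exact lintegral_const_mul _ (hf.comp measurable_updateFinset)

theorem lintegral_withDensity_eq_lmarginal [Fintype ι] [∀ i, SigmaFinite (μ i)] (s : Finset ι)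
    (hh : DependsOn h s) (hh_meas : Measurable h) (hf : Measurable f) (x₀ : ∀ i, E i) :
    ∫⁻ x, h x ∂(Measure.pi μ).withDensity f
      = lmarginal μ s (fun x => h x * lmarginal μ sᶜ f x) x₀ := by
  have h_inner : lmarginal μ sᶜ (fun x => h x * f x) = fun x => h x * lmarginal μ sᶜ f x :=
    funext <| lmarginal_mul_of_dependsOn sᶜ (by simpa using hh) hf
  calc ∫⁻ x, h x ∂(Measure.pi μ).withDensity f
      = ∫⁻ x, h x * f x ∂Measure.pi μ := by
        rw [lintegral_withDensity_eq_lintegral_mul _ hf hh_meas]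
        simp only [Pi.mul_apply, mul_comm]
    _ = lmarginal μ s (lmarginal μ sᶜ fun x => h x * f x) x₀ := by
        rw [lintegral_eq_lmarginal_univ x₀, ← Finset.union_compl s,
          lmarginal_union μ (fun x => h x * f x) (hh_meas.mul hf) disjoint_compl_right]
    _ = lmarginal μ s (fun x => h x * lmarginal μ sᶜ f x) x₀ := by rw [h_inner]

end MarginalIntegral

section ConditionalDensity

theorem safeDiv_le_div (a b : ℝ≥0∞) : safeDiv a b ≤ a / b := by
  unfold safeDiv
  split_ifs <;> simp

theorem measurable_safeDiv : Measurable fun q : ℝ≥0∞ × ℝ≥0∞ => safeDiv q.1 q.2 :=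
  Measurable.ite (measurable_snd (measurableSet_singleton 0)) measurable_const
    (measurable_fst.div measurable_snd)

variable (μ : ∀ i, Measure (π i)) {f g : (∀ i, π i) → ℝ≥0∞} {S T₁ T₂ : Finset (Fin d)}

theorem dependsOn_marginal (S : Finset (Fin d)) (f : (∀ i, π i) → ℝ≥0∞) :
    DependsOn (marginal μ S f) S := by
  simpa [marginal] using dependsOn_lmarginal (μ := μ) Sᶜ f

theorem dependsOn_condDens (T₁ T₂ : Finset (Fin d)) (f : (∀ i, π i) → ℝ≥0∞) :
    DependsOn (condDens μ T₁ T₂ f) (T₁ ∪ T₂ : Finset (Fin d)) := fun x y hxy => by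
  have h_union := dependsOn_marginal μ (T₁ ∪ T₂) f hxy
  have h_given := dependsOn_marginal μ T₂ f fun i hi => hxy i (Finset.mem_union_right T₁ hi)
  simp only [condDens, h_union, h_given]

variable {μ} in
theorem condDens_rpow_ne_zero {x : ∀ i, π i}
    (hx : ∀ S, marginal μ S f x ≠ 0 ∧ marginal μ S f x ≠ ∞) (T₁ T₂ : Finset (Fin d)) (w : ℝ) :
    condDens μ T₁ T₂ f x ^ w ≠ 0 := by
  rw [condDens, safeDiv, if_neg (hx T₂).1]
  have h_pos := ENNReal.div_pos (hx (T₁ ∪ T₂)).1 (hx T₂).2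
  exact (ENNReal.rpow_pos h_pos (ENNReal.div_ne_top (hx _).2 (hx _).1)).ne'

variable [∀ i, SigmaFinite (μ i)]

theorem measurable_marginal (S : Finset (Fin d)) (hf : Measurable f) :
    Measurable (marginal μ S f) :=
  hf.lmarginal μ

theorem measurable_condDens (T₁ T₂ : Finset (Fin d)) (hf : Measurable f) :
    Measurable (condDens μ T₁ T₂ f) :=
  measurable_safeDiv.comp ((measurable_marginal μ _ hf).prodMk (measurable_marginal μ _ hf))

theorem marginal_empty (f : (∀ i, π i) → ℝ≥0∞) (x : ∀ i, π i) :
    marginal μ ∅ f x = ∫⁻ y, f y ∂Measure.pi μ := by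
  rw [marginal, Finset.compl_empty, lintegral_eq_lmarginal_univ x]

theorem condDens_empty (S : Finset (Fin d)) (hf : ∫⁻ x, f x ∂Measure.pi μ = 1) :
    condDens μ S ∅ f = marginal μ S f := by
  funext x
  simp [condDens, safeDiv, marginal_empty, hf]

theorem lmarginal_marginal_union (hT : Disjoint T₁ T₂) (hf : Measurable f) :
    lmarginal μ T₁ (marginal μ (T₁ ∪ T₂) f) = marginal μ T₂ f := by
  have h_compl : T₁ ∪ (T₁ ∪ T₂)ᶜ = T₂ᶜ := by
    ext i
    have h_notMem : i ∈ T₁ → i ∉ T₂ := fun hi => Finset.disjoint_left.mp hT hi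
    simp only [Finset.mem_union, Finset.mem_compl]
    tauto
  have h_disj : Disjoint T₁ (T₁ ∪ T₂)ᶜ :=
    disjoint_compl_right.mono_left Finset.subset_union_left
  rw [marginal, marginal, ← lmarginal_union μ f hf h_disj, h_compl]

theorem lmarginal_marginal (S : Finset (Fin d)) (hf : Measurable f) (x : ∀ i, π i) :
    lmarginal μ S (marginal μ S f) x = ∫⁻ y, f y ∂Measure.pi μ := by
  rw [← marginal_empty μ f x, ← lmarginal_marginal_union μ (Finset.disjoint_empty_right S) hf,
    Finset.union_empty]

theorem ae_marginal_ne_zero_and_ne_top (S : Finset (Fin d)) (hf : Measurable f)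
    (hf_fin : ∫⁻ x, f x ∂Measure.pi μ ≠ ∞) :
    ∀ᵐ x ∂(Measure.pi μ).withDensity f, marginal μ S f x ≠ 0 ∧ marginal μ S f x ≠ ∞ := by
  rcases isEmpty_or_nonempty (∀ i, π i) with _ | ⟨⟨x₀⟩⟩
  · exact ae_of_all _ isEmptyElim
  let m := marginal μ S f
  let bad : ℝ≥0∞ → ℝ≥0∞ := Set.indicator {0, ∞} 1
  have h_meas : Measurable m := measurable_marginal μ S hf
  have h_bad : Measurable bad := measurable_const.indicator (Set.toFinite _).measurableSet
  have h_dep : DependsOn (fun x => bad (m x)) S :=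
    fun x y hxy => congrArg bad (dependsOn_marginal μ S f hxy)
  have h_fin : ∀ᵐ y ∂Measure.pi fun i : S => μ i, m (Function.updateFinset x₀ S y) < ∞ :=
    ae_lt_top (h_meas.comp measurable_updateFinset) <| by
      simpa [lmarginal, m] using (lmarginal_marginal μ S hf x₀).trans_ne hf_fin
  have h_zero : ∫⁻ x, bad (m x) ∂(Measure.pi μ).withDensity f = 0 := by
    rw [lintegral_withDensity_eq_lmarginal S h_dep (h_bad.comp h_meas) hf x₀]
    refine lintegral_eq_zero_of_ae_eq_zero ?_
    filter_upwards [h_fin] with y hy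
    change bad (m _) * m _ = 0
    by_cases h0 : m (Function.updateFinset x₀ S y) = 0 <;> simp [bad, h0, hy.ne]
  filter_upwards [(lintegral_eq_zero_iff (h_bad.comp h_meas)).mp h_zero] with x hx
  simpa [bad, Set.indicator_apply_eq_zero, m] using hx

theorem ae_forall_marginal_ne_zero_and_ne_top (hf : Measurable f)
    (hf_fin : ∫⁻ x, f x ∂Measure.pi μ ≠ ∞) :
    ∀ᵐ x ∂(Measure.pi μ).withDensity f,
      ∀ S, marginal μ S f x ≠ 0 ∧ marginal μ S f x ≠ ∞ :=
  ae_all_iff.mpr fun S => ae_marginal_ne_zero_and_ne_top μ S hf hf_fin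

theorem lmarginal_condDens_le_one (hT : Disjoint T₁ T₂) (hg : Measurable g) (x : ∀ i, π i) :
    lmarginal μ T₁ (condDens μ T₁ T₂ g) x ≤ 1 := by
  let m := marginal μ T₂ g
  let recip : (∀ i, π i) → ℝ≥0∞ := fun y => if m y = 0 then 0 else (m y)⁻¹
  have h_factor : condDens μ T₁ T₂ g = fun y => recip y * marginal μ (T₁ ∪ T₂) g y := by
    funext y
    simp only [condDens, safeDiv, recip, m]
    split_ifs
    · simp
    · rw [div_eq_mul_inv, mul_comm]
  have h_dep : DependsOn recip (T₁ᶜ : Set (Fin d)) := fun y z hyz => by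
    simp only [recip, m, dependsOn_marginal μ T₂ g fun i hi =>
      hyz i (Finset.disjoint_right.mp hT hi)]
  rw [h_factor, lmarginal_mul_of_dependsOn T₁ h_dep (measurable_marginal μ _ hg),
    lmarginal_marginal_union μ hT hg]
  simp only [recip]
  split_ifs
  · simp
  · exact ENNReal.inv_mul_le_one _

theorem lmarginal_marginal_mul_condDens_le (hT : Disjoint T₁ T₂) (hf : Measurable f)
    (hg : Measurable g) (x : ∀ i, π i) :
    lmarginal μ (T₁ ∪ T₂) (fun y => marginal μ T₂ f y * condDens μ T₁ T₂ g y) x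
      ≤ ∫⁻ y, f y ∂Measure.pi μ := by
  have h_dep : DependsOn (marginal μ T₂ f) (T₁ᶜ : Set (Fin d)) :=
    (dependsOn_marginal μ T₂ f).mono fun i hi => Finset.disjoint_right.mp hT hi
  have h_cond := measurable_condDens μ T₁ T₂ hg
  rw [lmarginal_union' μ (fun y => marginal μ T₂ f y * condDens μ T₁ T₂ g y)
    ((measurable_marginal μ T₂ hf).mul h_cond) hT,
    ← lmarginal_marginal μ T₂ hf x]
  refine lmarginal_mono (fun y => ?_) x
  rw [lmarginal_mul_of_dependsOn T₁ h_dep h_cond]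
  exact mul_le_of_le_one_right' (lmarginal_condDens_le_one μ hT hg y)

theorem lintegral_condDens_div_condDens_le (hT : Disjoint T₁ T₂) (hf : Measurable f)
    (hg : Measurable g) (hf_fin : ∫⁻ x, f x ∂Measure.pi μ ≠ ∞) :
    ∫⁻ x, condDens μ T₁ T₂ g x / condDens μ T₁ T₂ f x ∂(Measure.pi μ).withDensity f
      ≤ ∫⁻ x, f x ∂Measure.pi μ := by
  rcases isEmpty_or_nonempty (∀ i, π i) with _ | ⟨⟨x₀⟩⟩
  · simp
  let num : (∀ i, π i) → ℝ≥0∞ := fun x => marginal μ T₂ f x * condDens μ T₁ T₂ g x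
  let m := marginal μ (T₁ ∪ T₂) f
  have h_ratio : ∀ᵐ x ∂(Measure.pi μ).withDensity f,
      condDens μ T₁ T₂ g x / condDens μ T₁ T₂ f x = num x / m x := by
    filter_upwards [ae_marginal_ne_zero_and_ne_top μ T₂ hf hf_fin] with x hx
    rw [show condDens μ T₁ T₂ f x = m x / marginal μ T₂ f x from if_neg hx.1, div_eq_mul_inv,
      ENNReal.inv_div (Or.inl hx.2) (Or.inl hx.1), ← mul_div_assoc, mul_comm]
  have h_meas : Measurable fun x => num x / m x :=
    ((measurable_marginal μ _ hf).mul (measurable_condDens μ _ _ hg)).div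
      (measurable_marginal μ _ hf)
  have h_dep : DependsOn (fun x => num x / m x) (T₁ ∪ T₂ : Finset (Fin d)) := fun x y hxy => by
    have h_given := dependsOn_marginal μ T₂ f fun i hi => hxy i (Finset.mem_union_right T₁ hi)
    simp only [num, m, h_given, dependsOn_condDens μ T₁ T₂ g hxy,
      dependsOn_marginal μ (T₁ ∪ T₂) f hxy]
  calc ∫⁻ x, condDens μ T₁ T₂ g x / condDens μ T₁ T₂ f x ∂(Measure.pi μ).withDensity f
      = ∫⁻ x, num x / m x ∂(Measure.pi μ).withDensity f := lintegral_congr_ae h_ratio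
    _ = lmarginal μ (T₁ ∪ T₂) (fun x => num x / m x * m x) x₀ :=
        lintegral_withDensity_eq_lmarginal _ h_dep h_meas hf x₀
    _ ≤ lmarginal μ (T₁ ∪ T₂) num x₀ :=
        lmarginal_mono (fun x => (mul_comm _ _).trans_le ENNReal.mul_div_le) x₀
    _ ≤ ∫⁻ x, f x ∂Measure.pi μ := lmarginal_marginal_mul_condDens_le μ hT hf hg x₀

end ConditionalDensity

section CompositeLikelihood

/-- The ordered pair `(T←, T→)` of the conditional density in the `k`-th factor of the composite
likelihood. The marginal density `p_S` is encoded as the conditional density of `x_S` given no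
coordinate, i.e. as the pair `(S, ∅)`. -/
def factorPair : Sd d ⊕ Td d → Finset (Fin d) × Finset (Fin d) :=
  Sum.elim (fun S => (S.1, ∅)) Subtype.val

/-- The exponent `α_S/γ` or `β_T/γ` of the `k`-th factor of the composite likelihood. -/
def factorWeight (α : Sd d → ℝ) (β : Td d → ℝ) (γ : ℝ) : Sd d ⊕ Td d → ℝ :=
  Sum.elim (fun S => α S / γ) (fun T => β T / γ)

theorem disjoint_factorPair (k : Sd d ⊕ Td d) : Disjoint (factorPair k).1 (factorPair k).2 := by
  rcases k with S | T
  · exact Finset.disjoint_empty_right _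
  · exact T.2.2.2

variable {α : Sd d → ℝ} {β : Td d → ℝ} {γ : ℝ}

theorem factorWeight_nonneg (hα : ∀ S, 0 ≤ α S) (hβ : ∀ T, 0 ≤ β T) (hγ : 0 ≤ γ)
    (k : Sd d ⊕ Td d) : 0 ≤ factorWeight α β γ k := by
  rcases k with S | T
  · exact div_nonneg (hα S) hγ
  · exact div_nonneg (hβ T) hγ

theorem sum_factorWeight (hγ : γ = ∑ S, α S + ∑ T, β T) (hγ0 : γ ≠ 0) :
    ∑ k, factorWeight α β γ k = 1 := by
  simp only [Fintype.sum_sum_type, factorWeight, Sum.elim_inl, Sum.elim_inr]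
  rw [← Finset.sum_div, ← Finset.sum_div, ← add_div, ← hγ, div_self hγ0]

variable (μ : ∀ i, Measure (π i)) [∀ i, SigmaFinite (μ i)] {f g : (∀ i, π i) → ℝ≥0∞}

theorem compLik_eq_prod_condDens (α : Sd d → ℝ) (β : Td d → ℝ) (γ : ℝ)
    (hf : ∫⁻ x, f x ∂Measure.pi μ = 1) (x : ∀ i, π i) :
    compLik μ α β γ f x
      = ∏ k, condDens μ (factorPair k).1 (factorPair k).2 f x ^ factorWeight α β γ k := by
  simp [compLik, factorPair, factorWeight, condDens_empty μ _ hf]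

theorem ae_compLik_ne_zero (α : Sd d → ℝ) (β : Td d → ℝ) (γ : ℝ) (hf : Measurable f)
    (hf_one : ∫⁻ x, f x ∂Measure.pi μ = 1) :
    ∀ᵐ x ∂(Measure.pi μ).withDensity f, compLik μ α β γ f x ≠ 0 := by
  filter_upwards [ae_forall_marginal_ne_zero_and_ne_top μ hf (by simp [hf_one])] with x hx
  rw [compLik_eq_prod_condDens μ α β γ hf_one]
  exact Finset.prod_ne_zero_iff.mpr fun k _ => condDens_rpow_ne_zero hx _ _ _

theorem lintegral_compLik_div_compLik_le_one (hα : ∀ S, 0 ≤ α S) (hβ : ∀ T, 0 ≤ β T)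
    (hγ : γ = ∑ S, α S + ∑ T, β T) (hγpos : 0 < γ) (hf : Measurable f) (hg : Measurable g)
    (hf_one : ∫⁻ x, f x ∂Measure.pi μ = 1) (hg_one : ∫⁻ x, g x ∂Measure.pi μ = 1) :
    ∫⁻ x, compLik μ α β γ g x / compLik μ α β γ f x ∂(Measure.pi μ).withDensity f ≤ 1 := by
  let c (h : (∀ i, π i) → ℝ≥0∞) (k : Sd d ⊕ Td d) := condDens μ (factorPair k).1 (factorPair k).2 h
  let w := factorWeight α β γ
  have hw : ∀ k, 0 ≤ w k := factorWeight_nonneg hα hβ hγpos.le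
  have hf_fin : ∫⁻ x, f x ∂Measure.pi μ ≠ ∞ := by simp [hf_one]
  have h_prod : ∀ᵐ x ∂(Measure.pi μ).withDensity f,
      compLik μ α β γ g x / compLik μ α β γ f x = ∏ k, (c g k x / c f k x) ^ w k := by
    filter_upwards [ae_forall_marginal_ne_zero_and_ne_top μ hf hf_fin] with x hx
    simp only [ENNReal.div_rpow_of_nonneg _ _ (hw _)]
    rw [ENNReal.prod_div_distrib_of_ne_zero fun k _ =>
      condDens_rpow_ne_zero hx _ _ _,
      compLik_eq_prod_condDens μ α β γ hf_one, compLik_eq_prod_condDens μ α β γ hg_one]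
  have h_meas (k) : Measurable fun x => c g k x / c f k x :=
    (measurable_condDens μ _ _ hg).div (measurable_condDens μ _ _ hf)
  have h_factor (k) : ∫⁻ x, c g k x / c f k x ∂(Measure.pi μ).withDensity f ≤ 1 :=
    (lintegral_condDens_div_condDens_le μ (disjoint_factorPair k) hf hg hf_fin).trans_eq hf_one
  calc ∫⁻ x, compLik μ α β γ g x / compLik μ α β γ f x ∂(Measure.pi μ).withDensity f
      = ∫⁻ x, ∏ k, (c g k x / c f k x) ^ w k ∂(Measure.pi μ).withDensity f :=
        lintegral_congr_ae h_prod
    _ ≤ ∏ k, (∫⁻ x, c g k x / c f k x ∂(Measure.pi μ).withDensity f) ^ w k :=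
        ENNReal.lintegral_prod_norm_pow_le _
          (fun k _ => (h_meas k).aemeasurable)
          (sum_factorWeight hγ hγpos.ne') fun k _ => hw k
    _ ≤ 1 := Finset.prod_le_one' fun k _ => ENNReal.rpow_le_one (h_factor k) (hw k)

variable {Θ : Type*} [MeasurableSpace Θ] {p : Θ → (∀ i, π i) → ℝ≥0∞}

theorem measurable_uncurry_marginal (S : Finset (Fin d)) (hp : Measurable (Function.uncurry p)) :
    Measurable fun q : Θ × (∀ i, π i) => marginal μ S (p q.1) q.2 := by
  have h_update : Measurable fun r : (Θ × ∀ i, π i) × (∀ i : (Sᶜ : Finset (Fin d)), π i) =>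
      Function.updateFinset r.1.2 Sᶜ r.2 :=
    measurable_updateFinset'.comp ((measurable_snd.comp measurable_fst).prodMk measurable_snd)
  exact (hp.comp ((measurable_fst.comp measurable_fst).prodMk h_update)).lintegral_prod_right'

theorem measurable_uncurry_compLik (α : Sd d → ℝ) (β : Td d → ℝ) (γ : ℝ)
    (hp : Measurable (Function.uncurry p)) :
    Measurable fun q : Θ × (∀ i, π i) => compLik μ α β γ (p q.1) q.2 := by
  have h_marg (S : Finset (Fin d)) := measurable_uncurry_marginal μ S hp
  have h_cond (T : Td d) : Measurable fun q : Θ × (∀ i, π i) =>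
      condDens μ T.1.1 T.1.2 (p q.1) q.2 := measurable_safeDiv.comp ((h_marg _).prodMk (h_marg _))
  exact (Finset.measurable_fun_prod _ fun S _ => (h_marg S.1).pow_const _).mul
    (Finset.measurable_fun_prod _ fun T _ => (h_cond T).pow_const _)

end CompositeLikelihood

section Ville

variable {Ω : Type*} [mΩ : MeasurableSpace Ω] {P : Measure Ω} {F : Filtration ℕ mΩ}

/-- `ℝ≥0∞`-valued supermartingales in discrete time. Lower Lebesgue integrals over the events of
`F n` replace conditional expectations, so no integrability is required. -/
structure IsLSupermartingale (L : ℕ → Ω → ℝ≥0∞) (F : Filtration ℕ mΩ) (P : Measure Ω) :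
    Prop where
  measurable : ∀ n, Measurable[F n] (L n)
  setLIntegral_succ_le : ∀ n (A : Set Ω), MeasurableSet[F n] A →
    ∫⁻ ω in A, L (n + 1) ω ∂P ≤ ∫⁻ ω in A, L n ω ∂P

theorem mul_measure_inter_add_setLIntegral_sdiff_le {f : Ω → ℝ≥0∞} (hf : Measurable f)
    {A : Set Ω} (hA : MeasurableSet A) (c : ℝ≥0∞) :
    c * P (A ∩ {ω | c ≤ f ω}) + ∫⁻ ω in A \ {ω | c ≤ f ω}, f ω ∂P ≤ ∫⁻ ω in A, f ω ∂P := by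
  have h_ge : MeasurableSet {ω | c ≤ f ω} := hf measurableSet_Ici
  rw [← lintegral_inter_add_sdiff f A h_ge, ← setLIntegral_const]
  gcongr ?_ + _
  exact setLIntegral_mono' (hA.inter h_ge) fun ω hω => hω.2

namespace IsLSupermartingale

variable {L : ℕ → Ω → ℝ≥0∞}

theorem mul_measure_accumulate_add_setLIntegral_le (hL : IsLSupermartingale L F P) (c : ℝ≥0∞)
    (n : ℕ) :
    c * P (Set.accumulate (fun k => {ω | c ≤ L k ω}) n)
      + ∫⁻ ω in (Set.accumulate (fun k => {ω | c ≤ L k ω}) n)ᶜ, L n ω ∂P ≤ ∫⁻ ω, L 0 ω ∂P := by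
  let above (k : ℕ) : Set Ω := {ω | c ≤ L k ω}
  let hit (k : ℕ) : Set Ω := Set.accumulate above k
  have h_meas (k) : Measurable (L k) := (hL.measurable k).mono (F.le k) le_rfl
  have h_hit (k) : MeasurableSet[F k] (hit k) :=
    .biUnion (Set.to_countable _) fun j hj => F.mono hj _ (hL.measurable j measurableSet_Ici)
  induction n with
  | zero =>
    simpa [Set.accumulate_zero_nat, Set.compl_eq_univ_sdiff] using
      mul_measure_inter_add_setLIntegral_sdiff_le (P := P) (h_meas 0) .univ c
  | succ n ih =>
    have h_union : hit (n + 1) = hit n ∪ (hit n)ᶜ ∩ above (n + 1) := by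
      rw [Set.union_inter_distrib_left, Set.union_compl_self, Set.univ_inter]
      exact Set.accumulate_succ above n
    have h_compl : (hit (n + 1))ᶜ = (hit n)ᶜ \ above (n + 1) := by
      rw [show hit (n + 1) = hit n ∪ above (n + 1) from Set.accumulate_succ above n,
        Set.compl_union, Set.sdiff_eq]
    calc c * P (hit (n + 1)) + ∫⁻ ω in (hit (n + 1))ᶜ, L (n + 1) ω ∂P
        ≤ c * (P (hit n) + P ((hit n)ᶜ ∩ above (n + 1)))
            + ∫⁻ ω in (hit n)ᶜ \ above (n + 1), L (n + 1) ω ∂P := by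
          rw [h_compl, h_union]
          gcongr
          exact measure_union_le _ _
      _ ≤ c * P (hit n) + ∫⁻ ω in (hit n)ᶜ, L (n + 1) ω ∂P := by
          rw [mul_add, add_assoc]
          gcongr
          exact mul_measure_inter_add_setLIntegral_sdiff_le (h_meas _)
            (F.le n _ (h_hit n)).compl c
      _ ≤ c * P (hit n) + ∫⁻ ω in (hit n)ᶜ, L n ω ∂P := by
          gcongr ?_ + ?_
          · rfl
          · exact hL.setLIntegral_succ_le n _ (h_hit n).compl
      _ ≤ ∫⁻ ω, L 0 ω ∂P := ih

/-- **Ville's inequality**. -/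
theorem mul_measure_exists_le_le (hL : IsLSupermartingale L F P) (c : ℝ≥0∞) :
    c * P {ω | ∃ n, c ≤ L n ω} ≤ ∫⁻ ω, L 0 ω ∂P := by
  rw [Set.ofPred_exists, measure_iUnion_eq_iSup_accumulate, ENNReal.mul_iSup]
  exact iSup_le fun n => le_self_add.trans (hL.mul_measure_accumulate_add_setLIntegral_le c n)

end IsLSupermartingale

end Ville

section PredictableProducts

variable {Ω E Θ : Type*} [mΩ : MeasurableSpace Ω] [MeasurableSpace E] [MeasurableSpace Θ]
  {P : Measure Ω}

theorem lintegral_comp_prodMk_of_indepFun [IsFiniteMeasure P] {Y : Ω → Θ} {Z : Ω → E}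
    (hY : Measurable Y) (hZ : Measurable Z) (hYZ : ProbabilityTheory.IndepFun Y Z P)
    {g : Θ × E → ℝ≥0∞} (hg : Measurable g) :
    ∫⁻ ω, g (Y ω, Z ω) ∂P = ∫⁻ ω, ∫⁻ z, g (Y ω, z) ∂P.map Z ∂P := by
  rw [← lintegral_map hg (hY.prodMk hZ),
    hYZ.map_prod_eq_prod_map_map hY.aemeasurable hZ.aemeasurable,
    lintegral_prod _ hg.aemeasurable, lintegral_map hg.lintegral_prod_right' hY]

theorem isLSupermartingale_prod [IsFiniteMeasure P] {F : Filtration ℕ mΩ} {Z : ℕ → Ω → E}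
    (hZ : ∀ n, Measurable[F (n + 1)] (Z n))
    (hZ_indep : ∀ n, ProbabilityTheory.Indep (F n) (MeasurableSpace.comap (Z n) inferInstance) P)
    {V : ℕ → Ω → Θ} (hV : ∀ n, Measurable[F n] (V n))
    {r : Θ × E → ℝ≥0∞} (hr : Measurable r) (hr_le : ∀ n v, ∫⁻ z, r (v, z) ∂P.map (Z n) ≤ 1) :
    IsLSupermartingale (fun n ω => ∏ i ∈ Finset.range n, r (V i ω, Z i ω)) F P := by
  let L (n : ℕ) (ω : Ω) : ℝ≥0∞ := ∏ i ∈ Finset.range n, r (V i ω, Z i ω)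
  have hL (n) : Measurable[F n] (L n) := by
    refine Finset.measurable_fun_prod _ fun i hi => ?_
    have hin := Finset.mem_range.mp hi
    exact hr.comp (((hV i).mono (F.mono hin.le) le_rfl).prodMk ((hZ i).mono (F.mono hin) le_rfl))
  refine ⟨hL, fun n A hA => ?_⟩
  let past (ω : Ω) : ℝ≥0∞ × Θ := (A.indicator (L n) ω, V n ω)
  have h_past : Measurable[F n] past := ((hL n).indicator hA).prodMk (hV n)
  have h_indep : ProbabilityTheory.IndepFun past (Z n) P :=
    (ProbabilityTheory.IndepFun_iff_Indep _ _ _).mpr <|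
      ProbabilityTheory.indep_of_indep_of_le_left (hZ_indep n) h_past.comap_le
  have h_section (v : Θ) : Measurable fun z => r (v, z) := hr.comp measurable_prodMk_left
  calc ∫⁻ ω in A, L (n + 1) ω ∂P
      = ∫⁻ ω, (past ω).1 * r ((past ω).2, Z n ω) ∂P := by
        rw [← lintegral_indicator (F.le n _ hA)]
        refine lintegral_congr fun ω => ?_
        by_cases hω : ω ∈ A <;> simp [past, L, hω, Finset.prod_range_succ]
    _ = ∫⁻ ω, ∫⁻ z, (past ω).1 * r ((past ω).2, z) ∂P.map (Z n) ∂P :=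
        lintegral_comp_prodMk_of_indepFun (h_past.mono (F.le n) le_rfl)
          ((hZ n).mono (F.le _) le_rfl) h_indep
          (g := fun q : (ℝ≥0∞ × Θ) × E => q.1.1 * r (q.1.2, q.2)) (by fun_prop)
    _ = ∫⁻ ω, (past ω).1 * ∫⁻ z, r ((past ω).2, z) ∂P.map (Z n) ∂P :=
        lintegral_congr fun ω => lintegral_const_mul _ (h_section _)
    _ ≤ ∫⁻ ω, (past ω).1 ∂P := lintegral_mono fun ω => mul_le_of_le_one_right' (hr_le n _)
    _ = ∫⁻ ω in A, L n ω ∂P := lintegral_indicator (F.le n _ hA) _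

end PredictableProducts

section PastFiltration

variable {Ω E : Type*} [mΩ : MeasurableSpace Ω] [MeasurableSpace E] {X : ℕ → Ω → E}

/-- The natural filtration `σ(X_0, …, X_{n-1})` of a sequence, with trivial initial σ-algebra. It
lags `MeasureTheory.Filtration.natural`, whose `n`-th σ-algebra contains `σ(X_n)`. -/
def pastFiltration (X : ℕ → Ω → E) (hX : ∀ n, Measurable (X n)) : Filtration ℕ mΩ where
  seq n := MeasurableSpace.comap (fun ω => fun j : Fin n => X j ω) inferInstance
  mono' m n hmn := by
    have h_restrict : Measurable fun (z : Fin n → E) (j : Fin m) => z (Fin.castLE hmn j) := by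
      fun_prop
    exact (h_restrict.comp (comap_measurable fun ω => fun j : Fin n => X j ω)).comap_le
  le' n := (measurable_pi_lambda (fun ω => fun j : Fin n => X j ω) fun j => hX j).comap_le

theorem measurable_pastFiltration_succ (hX : ∀ n, Measurable (X n)) (n : ℕ) :
    Measurable[pastFiltration X hX (n + 1)] (X n) :=
  (measurable_pi_apply (Fin.last n)).comp
    (comap_measurable fun ω => fun j : Fin (n + 1) => X j ω)

theorem indep_pastFiltration {P : Measure Ω} (hX : ∀ n, Measurable (X n))
    (hX_indep : ProbabilityTheory.iIndepFun X P) (n : ℕ) :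
    ProbabilityTheory.Indep (pastFiltration X hX n)
      (MeasurableSpace.comap (X n) inferInstance) P := by
  have h_fin : Measurable fun (z : Finset.range n → E) (j : Fin n) =>
      z ⟨j, Finset.mem_range.mpr j.2⟩ := by fun_prop
  have h_single : Measurable fun z : ({n} : Finset ℕ) → E => z ⟨n, Finset.mem_singleton_self n⟩ :=
    measurable_pi_apply _
  exact (ProbabilityTheory.IndepFun_iff_Indep _ _ _).mp <|
    (hX_indep.indepFun_finset (Finset.range n) {n} (by simp) hX).comp h_fin h_single

end PastFiltration

theorem safeDiv_prod_le_prod_div {ι : Type*} {s : Finset ι} {a b : ι → ℝ≥0∞} {c : ℝ≥0∞}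
    (hb : ∀ i ∈ s, b i ≠ 0) (hbc : ∏ i ∈ s, b i ≤ c) :
    safeDiv (∏ i ∈ s, a i) c ≤ ∏ i ∈ s, a i / b i :=
  calc safeDiv (∏ i ∈ s, a i) c ≤ (∏ i ∈ s, a i) / c := safeDiv_le_div _ _
    _ ≤ (∏ i ∈ s, a i) / ∏ i ∈ s, b i := ENNReal.div_le_div_left hbc _
    _ = ∏ i ∈ s, a i / b i := (ENNReal.prod_div_distrib_of_ne_zero hb).symm

theorem running_p_value_valid_general (μ : ∀ i, Measure (π i)) [∀ i, SigmaFinite (μ i)]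
    {Θ : Type*} [MeasurableSpace Θ] {p : Θ → (∀ i, π i) → ℝ≥0∞}
    (hp_meas : Measurable (Function.uncurry p)) (hp_prob : ∀ θ, ∫⁻ x, p θ x ∂Measure.pi μ = 1)
    {α : Sd d → ℝ} {β : Td d → ℝ} (hα : ∀ S, 0 ≤ α S) (hβ : ∀ T, 0 ≤ β T)
    {γ : ℝ} (hγ : γ = ∑ S, α S + ∑ T, β T) (hγpos : 0 < γ)
    {Ω : Type*} [mΩ : MeasurableSpace Ω] {P : Measure Ω} [IsProbabilityMeasure P]
    {F : Filtration ℕ mΩ} {X : ℕ → Ω → ∀ i, π i} (hX : ∀ n, Measurable[F (n + 1)] (X n))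
    (hX_indep : ∀ n, ProbabilityTheory.Indep (F n) (MeasurableSpace.comap (X n) inferInstance) P)
    {θstar : Θ} (hX_law : ∀ n, P.map (X n) = (Measure.pi μ).withDensity (p θstar))
    {θtilde : ℕ → Ω → Θ} (hθtilde : ∀ n, Measurable[F n] (θtilde n)) {θhat : ℕ → Ω → Θ}
    (hθhat : ∀ n ω, ∏ i ∈ Finset.range n, compLik μ α β γ (p θstar) (X i ω)
      ≤ ∏ i ∈ Finset.range n, compLik μ α β γ (p (θhat n ω)) (X i ω)) (a : ℝ≥0∞) :
    P {ω | ∃ n, (safeDiv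
        (∏ i ∈ Finset.range n, compLik μ α β γ (p (θtilde i ω)) (X i ω))
        (∏ i ∈ Finset.range n, compLik μ α β γ (p (θhat n ω)) (X i ω)))⁻¹ ≤ a} ≤ a := by
  let r (q : Θ × ∀ i, π i) : ℝ≥0∞ := compLik μ α β γ (p q.1) q.2 / compLik μ α β γ (p θstar) q.2
  let L (n : ℕ) (ω : Ω) : ℝ≥0∞ := ∏ i ∈ Finset.range n, r (θtilde i ω, X i ω)
  have hp (θ) : Measurable (p θ) := hp_meas.comp measurable_prodMk_left
  have hr : Measurable r :=
    have h_lik := measurable_uncurry_compLik μ α β γ hp_meas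
    h_lik.div (h_lik.comp (measurable_const.prodMk measurable_snd))
  have hr_le (n θ) : ∫⁻ x, r (θ, x) ∂P.map (X n) ≤ 1 := by
    have h_ratio := lintegral_compLik_div_compLik_le_one μ hα hβ hγ hγpos (hp θstar) (hp θ)
      (hp_prob θstar) (hp_prob θ)
    rw [hX_law]
    exact h_ratio
  have h_ville : a⁻¹ * P {ω | ∃ n, a⁻¹ ≤ L n ω} ≤ 1 := by
    have hL : IsLSupermartingale L F P := isLSupermartingale_prod hX hX_indep hθtilde hr hr_le
    simpa [L] using hL.mul_measure_exists_le_le a⁻¹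
  have h_ne_zero : ∀ᵐ ω ∂P, ∀ i, compLik μ α β γ (p θstar) (X i ω) ≠ 0 := ae_all_iff.mpr fun i => by
    have h := ae_compLik_ne_zero μ α β γ (hp θstar) (hp_prob θstar)
    rw [← hX_law i] at h
    exact ae_of_ae_map ((hX i).mono (F.le _) le_rfl).aemeasurable h
  calc P _ ≤ P {ω | ∃ n, a⁻¹ ≤ L n ω} := measure_mono_ae <| by
        filter_upwards [h_ne_zero] with ω hω ⟨n, hn⟩
        exact ⟨n, (ENNReal.inv_le_iff_inv_le.mp hn).trans
          (safeDiv_prod_le_prod_div (fun i _ => hω i) (hθhat n ω))⟩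
    _ ≤ a⁻¹⁻¹ := ENNReal.le_inv_iff_mul_le.mpr ((mul_comm _ _).trans_le h_ville)
    _ = a := inv_inv a

/-- The running p-value is valid at arbitrary random times: for any
`ℕ`-valued random variable `N` (not necessarily a stopping time) and every
`a ∈ [0,1]`, `sup_{θ*∈Θ₀} Pr_{θ*}(P_N ≤ a) ≤ a`, where `P_n = 1/M_{α,β,n}`
(equal to `+∞` when `M_{α,β,n} = 0`). -/
theorem running_p_value_valid
    {d : ℕ} (hd : 1 ≤ d)
    {π : Fin d → Type*} [∀ i, MeasurableSpace (π i)]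
    (μ : ∀ i, Measure (π i)) [∀ i, SigmaFinite (μ i)]
    {Θ : Type*} [MeasurableSpace Θ]
    (p : Θ → (∀ i, π i) → ℝ≥0∞)
    (hp_meas : Measurable (Function.uncurry p))
    (hp_prob : ∀ θ : Θ, ∫⁻ x, p θ x ∂(Measure.pi μ) = 1)
    (α : Sd d → ℝ) (β : Td d → ℝ)
    (hα : ∀ S, 0 ≤ α S) (hβ : ∀ T, 0 ≤ β T)
    (γ : ℝ) (hγ : γ = ∑ S, α S + ∑ T, β T) (hγpos : 0 < γ)
    {Ω : Type*} [MeasurableSpace Ω]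
    (Pr : Measure Ω) [IsProbabilityMeasure Pr]
    (θstar : Θ)
    -- `X 0, X 1, X 2, …` is the i.i.d. sequence `X_1, X_2, …` (0-indexed),
    -- each observation having density `p(·;θ*)` with respect to `μ`
    (X : ℕ → Ω → (∀ i, π i))
    (hX : ∀ i, Measurable (X i))
    (hiid : ProbabilityTheory.iIndepFun X Pr)
    (hlaw : ∀ i, Measure.map (X i) Pr = (Measure.pi μ).withDensity (p θstar))
    -- the natural filtration `F n = σ(X_1,…,X_n)` (so `F 0` is trivial)
    (F : ℕ → MeasurableSpace Ω)
    (hF : ∀ n, F n = MeasurableSpace.comap (fun ω => fun j : Fin n => X j ω)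
      (inferInstance : MeasurableSpace (Fin n → ∀ i, π i)))
    -- non-anticipating estimators: `θtilde i` is the estimator `θ̃_i`
    -- built from `X_1,…,X_i`, i.e. measurable with respect to `F i`
    (θtilde : ℕ → Ω → Θ)
    (hθtilde : ∀ i, @Measurable Ω Θ (F i) _ (θtilde i))
    -- null hypothesis parameter space and maximum composite likelihood
    -- estimators over `Θ₀`: `θhat n` is `F n`-measurable, `Θ₀`-valued and
    -- maximizes the composite likelihood of the first `n` observations over `Θ₀`
    (Θ0 : Set Θ)
    (θhat : ℕ → Ω → Θ)
    (hθhat_meas : ∀ n, @Measurable Ω Θ (F n) _ (θhat n))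
    (hθhat_mem : ∀ n ω, θhat n ω ∈ Θ0)
    (hθhat_max : ∀ n ω, ∀ θ ∈ Θ0,
      (∏ i ∈ Finset.range n, compLik μ α β γ (p θ) (X i ω))
        ≤ ∏ i ∈ Finset.range n, compLik μ α β γ (p (θhat n ω)) (X i ω))
    -- the DGP parameter lies in the null hypothesis set
    (hθstar : θstar ∈ Θ0)
    (N : Ω → ℕ) (hN : Measurable N)
    (a : ℝ) (ha0 : 0 ≤ a) (ha1 : a ≤ 1) :
    Pr {ω | (safeDiv
        (∏ i ∈ Finset.range (N ω), compLik μ α β γ (p (θtilde i ω)) (X i ω))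
        (∏ i ∈ Finset.range (N ω), compLik μ α β γ (p (θhat (N ω) ω)) (X i ω)))⁻¹
      ≤ ENNReal.ofReal a} ≤ ENNReal.ofReal a := by
  obtain rfl : F = pastFiltration X hX := funext hF
  refine (measure_mono ?_).trans <|
    running_p_value_valid_general μ hp_meas hp_prob hα hβ hγ hγpos
      (measurable_pastFiltration_succ hX) (indep_pastFiltration hX hiid) hlaw hθtilde
      (fun n ω => hθhat_max n ω θstar hθstar) (ENNReal.ofReal a)
  exact fun ω hω => ⟨N ω, hω⟩
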